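/- arXiv:2506.07252 — 3 statements merged into one kernel-verified Lean document; each statement's English description precedes it below -/
import Mathlib

section
/- Let C be a convex polygon in ℝ² and O an interior point of C. If φ* is a local maximizer of the chord-length function f̃(φ) = |l(φ) ∩ C|, with chord [A*B*], then at least one of the endpoints A*, B* is a vertex of C. -/
open Real RealInnerProductSpace

/-- Unit direction vector in the plane at angle `φ`. -/
noncomputable def lineDir (φ : ℝ) : EuclideanSpace ℝ (Fin 2) :=
  (WithLp.equiv 2 (Fin 2 → ℝ)).symm ![Real.cos φ, Real.sin φ]

/-!
If neither end of the chord at angle `φ` is an extreme point of `C`, then each end lies inside a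
segment of `C` which is transversal to the chord. The chord at angle `φ + h` reaches at least as
far as these two segments, at distances of the form `a / (cos h - s * sin h)` from `O`, and such a
distance is strictly midpoint convex at `h = 0` because `(cos h) ^ 2 < cos h` for small `h ≠ 0`.
So the chords at `φ + h` and `φ - h` are together longer than twice the chord at `φ`.
-/

open Filter Topology

theorem eventually_add_sub_le_two_mul_of_isLocalMax {E : Type*} [AddGroup E] [TopologicalSpace E]
    [IsTopologicalAddGroup E] {f : E → ℝ} {x : E} (hf : IsLocalMax f x) :
    ∀ᶠ h in 𝓝 0, f (x + h) + f (x - h) ≤ 2 * f x := by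
  have hadd : Tendsto (fun h => x + h) (𝓝 0) (𝓝 x) :=
    (continuous_const.add continuous_id).tendsto' _ _ (add_zero x)
  have hsub : Tendsto (fun h => x - h) (𝓝 0) (𝓝 x) :=
    (continuous_const.sub continuous_id).tendsto' _ _ (sub_zero x)
  filter_upwards [hadd.eventually hf, hsub.eventually hf] with h h₁ h₂
  linarith

theorem uIcc_mem_nhds_iff {α : Type*} [LinearOrder α] [TopologicalSpace α] [OrderTopology α]
    [DenselyOrdered α] [NoMinOrder α] [NoMaxOrder α] {a b x : α} :
    Set.uIcc a b ∈ 𝓝 x ↔ min a b < x ∧ x < max a b := by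
  rw [← mem_interior_iff_mem_nhds, Set.uIcc, interior_Icc, Set.mem_Ioo]

theorem mul_neg_of_uIcc_mem_nhds_zero {α : Type*} [Ring α] [LinearOrder α] [IsStrictOrderedRing α]
    [TopologicalSpace α] [OrderTopology α] [DenselyOrdered α] {a b : α}
    (h : Set.uIcc a b ∈ 𝓝 0) : a * b < 0 := by
  obtain ⟨ha | hb, ha' | hb'⟩ := by rwa [uIcc_mem_nhds_iff, min_lt_iff, lt_max_iff] at h
  · exact absurd ha ha'.not_gt
  · exact mul_neg_of_neg_of_pos ha hb'
  · exact mul_neg_of_pos_of_neg ha' hb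
  · exact absurd hb hb'.not_gt

section ChordParams

/-- The chord of `C` on the line through `O` with direction `u`, as a set of parameters. For
`w ≠ 0` and convex `C`, `chordParams C x w ∈ 𝓝 0` says that `x` lies in the relative interior of
a segment of `C` parallel to `w`. -/
def chordParams {E : Type*} [AddCommGroup E] [Module ℝ E] (C : Set E) (O u : E) : Set ℝ :=
  {t | O + t • u ∈ C}

variable {E : Type*} [AddCommGroup E] [Module ℝ E] {C : Set E} {O u v w x : E} {a b t : ℝ}

theorem chordParams_mem_nhds_zero_of_mem_interior [TopologicalSpace E] [ContinuousAdd E]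
    [ContinuousSMul ℝ E] (hO : O ∈ interior C) (u : E) : chordParams C O u ∈ 𝓝 0 := by
  have hcont : Continuous fun t : ℝ => O + t • u := by fun_prop
  exact hcont.tendsto' 0 O (by simp) (mem_interior_iff_mem_nhds.1 hO)

theorem chordParams_add_smul_mem_nhds_zero_iff :
    chordParams C (O + t • u) u ∈ 𝓝 0 ↔ chordParams C O u ∈ 𝓝 t := by
  rw [← map_add_left_nhds_zero t, mem_map]
  simp only [chordParams, Set.preimage_ofPred_eq, add_smul, add_assoc]

theorem chordParams_smul_mem_nhds_zero (h : chordParams C x w ∈ 𝓝 0) (r : ℝ) :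
    chordParams C x (r • w) ∈ 𝓝 0 := by
  have hpre : chordParams C x (r • w) = (· * r) ⁻¹' chordParams C x w := by
    simp only [chordParams, Set.preimage_ofPred_eq, mul_smul]
  rw [hpre]
  exact (continuous_mul_const r).tendsto' 0 0 (zero_mul r) h

theorem exists_ne_zero_chordParams_mem_nhds_zero (hC : Convex ℝ C) (hx : x ∈ C)
    (hext : x ∉ C.extremePoints ℝ) : ∃ w ≠ 0, chordParams C x w ∈ 𝓝 0 := by
  rw [mem_extremePoints_iff_left] at hext
  push Not at hext
  obtain ⟨P, hP, Q, hQ, hPxQ, hPx⟩ := hext hx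
  rw [openSegment_eq_image'] at hPxQ
  obtain ⟨q, ⟨hq₀, hq₁⟩, rfl⟩ := hPxQ
  refine ⟨Q - P, fun hQP => hPx (by simp [hQP]), ?_⟩
  rw [chordParams_add_smul_mem_nhds_zero_iff]
  filter_upwards [Icc_mem_nhds hq₀ hq₁] with t ht using hC.add_smul_sub_mem hP hQ ht

theorem exists_chordParams_eq_uIcc (hu : u ≠ 0) {A B : E}
    (hchord : {x | ∃ t : ℝ, x = O + t • u} ∩ C = segment ℝ A B) :
    ∃ a b : ℝ, A = O + a • u ∧ B = O + b • u ∧ chordParams C O u = Set.uIcc a b := by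
  obtain ⟨⟨a, rfl⟩, -⟩ := hchord.ge (left_mem_segment ℝ A B)
  obtain ⟨⟨b, rfl⟩, -⟩ := hchord.ge (right_mem_segment ℝ _ B)
  refine ⟨a, b, rfl, rfl, ?_⟩
  let ℓ : ℝ →ᵃ[ℝ] E := AffineMap.lineMap O (O + u)
  have hℓ (t : ℝ) : ℓ t = O + t • u := by simp [ℓ, AffineMap.lineMap_apply, add_comm]
  have hinj : Function.Injective ℓ := AffineMap.lineMap_injective ℝ (by simpa using hu)
  rw [← hℓ a, ← hℓ b, ← image_segment, segment_eq_uIcc] at hchord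
  calc chordParams C O u = ℓ ⁻¹' ({x | ∃ t : ℝ, x = O + t • u} ∩ C) := by
        ext t
        rw [Set.mem_preimage, hℓ]
        exact (and_iff_right ⟨t, rfl⟩).symm
    _ = Set.uIcc a b := by rw [hchord, hinj.preimage_image]

theorem exists_transversal_of_notMem_extremePoints (hC : Convex ℝ C)
    (huv : Submodule.span ℝ {u, v} = ⊤) (hchord : chordParams C O u = Set.uIcc a b)
    (hext : O + a • u ∉ C.extremePoints ℝ) :
    ∃ s : ℝ, chordParams C (O + a • u) (s • u + v) ∈ 𝓝 0 := by
  have hmem : O + a • u ∈ C := hchord.ge Set.left_mem_uIcc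
  obtain ⟨w, hw, hxw⟩ := exists_ne_zero_chordParams_mem_nhds_zero hC hmem hext
  obtain ⟨p, q, rfl⟩ := Submodule.mem_span_pair.1 (huv ▸ Submodule.mem_top (x := w))
  have hu_not : chordParams C (O + a • u) u ∉ 𝓝 0 := by
    rw [chordParams_add_smul_mem_nhds_zero_iff, hchord, uIcc_mem_nhds_iff, min_lt_iff, lt_max_iff]
    grind
  have hq : q ≠ 0 := by
    rintro rfl
    have hp : p ≠ 0 := by rintro rfl; simp at hw
    have := chordParams_smul_mem_nhds_zero hxw p⁻¹
    rw [zero_smul, add_zero, inv_smul_smul₀ hp] at this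
    exact hu_not this
  refine ⟨q⁻¹ * p, ?_⟩
  have := chordParams_smul_mem_nhds_zero hxw q⁻¹
  rwa [smul_add, inv_smul_smul₀ hq, smul_smul] at this

end ChordParams

section LineRadius

/-- The line `x = a + s * y` in polar coordinates: the radius of its point at angle `h`, where
`h` must be small enough for the denominator to be positive. -/
noncomputable def lineRadius (a s h : ℝ) : ℝ :=
  a / (cos h - s * sin h)

variable {a b s : ℝ}

theorem eventually_cos_sub_mul_sin_pos (s : ℝ) : ∀ᶠ h in 𝓝 (0 : ℝ), 0 < cos h - s * sin h := by
  have hcont : Continuous fun h : ℝ => cos h - s * sin h := by fun_prop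
  exact hcont.tendsto' 0 1 (by simp) |>.eventually_const_lt one_pos

theorem eventually_cos_mem_Ioo : ∀ᶠ h in 𝓝[≠] (0 : ℝ), cos h ∈ Set.Ioo 0 1 := by
  have hsmall : ∀ᶠ h in 𝓝[≠] (0 : ℝ), h ∈ Set.Ioo (-(π / 2)) (π / 2) :=
    eventually_nhdsWithin_of_eventually_nhds (Ioo_mem_nhds (by simp [pi_pos]) pi_div_two_pos)
  filter_upwards [hsmall, self_mem_nhdsWithin] with h hh hne
  refine ⟨cos_pos_of_mem_Ioo hh, (cos_le_one h).lt_of_ne fun hcos => hne ?_⟩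
  exact (cos_eq_one_iff_of_lt_of_lt (by linarith [hh.1, pi_pos]) (by linarith [hh.2, pi_pos])).1
    hcos

theorem eventually_two_mul_lt_lineRadius_add_lineRadius_neg (ha : 0 < a) (s : ℝ) :
    ∀ᶠ h in 𝓝[≠] (0 : ℝ), 2 * a < lineRadius a s h + lineRadius a s (-h) := by
  filter_upwards [eventually_cos_mem_Ioo,
    eventually_nhdsWithin_of_eventually_nhds (eventually_cos_sub_mul_sin_pos s),
    eventually_nhdsWithin_of_eventually_nhds (eventually_cos_sub_mul_sin_pos (-s))]
    with h ⟨hcos₀, hcos₁⟩ hminus hplus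
  rw [neg_mul, sub_neg_eq_add] at hplus
  have hprod : (cos h - s * sin h) * (cos h + s * sin h) < cos h := by
    calc (cos h - s * sin h) * (cos h + s * sin h) = cos h ^ 2 - (s * sin h) ^ 2 := by ring
      _ ≤ cos h ^ 2 := sub_le_self _ (sq_nonneg _)
      _ < cos h := pow_lt_self_of_lt_one₀ hcos₀ hcos₁ one_lt_two
  simp only [lineRadius, cos_neg, sin_neg, mul_neg, sub_neg_eq_add]
  rw [div_add_div _ _ hminus.ne' hplus.ne', lt_div_iff₀ (mul_pos hminus hplus)]
  calc 2 * a * ((cos h - s * sin h) * (cos h + s * sin h)) < 2 * a * cos h := by gcongr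
    _ = a * (cos h + s * sin h) + (cos h - s * sin h) * a := by ring

theorem lineRadius_neg_left (a s h : ℝ) : lineRadius (-a) s h = -lineRadius a s h :=
  neg_div _ _

theorem eventually_two_mul_dist_lt_of_mul_neg (hab : a * b < 0) (s t : ℝ) :
    ∀ᶠ h in 𝓝[≠] (0 : ℝ), 2 * dist a b < dist (lineRadius a s h) (lineRadius b t h) +
      dist (lineRadius a s (-h)) (lineRadius b t (-h)) := by
  wlog ha : 0 < a generalizing a b s t
  · have hb : 0 < b := pos_of_mul_neg_right hab (not_lt.1 ha)
    simpa only [dist_comm (lineRadius b t _), dist_comm b] using this (mul_comm a b ▸ hab) t s hb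
  have hb : b < 0 := neg_of_mul_neg_right hab ha.le
  filter_upwards [eventually_two_mul_lt_lineRadius_add_lineRadius_neg ha s,
    eventually_two_mul_lt_lineRadius_add_lineRadius_neg (neg_pos.2 hb) t] with h hA hB
  simp only [lineRadius_neg_left] at hB
  simp only [Real.dist_eq, abs_of_pos (sub_pos.2 (hb.trans ha))]
  linarith [le_abs_self (lineRadius a s h - lineRadius b t h),
    le_abs_self (lineRadius a s (-h) - lineRadius b t (-h))]

theorem eventually_lineRadius_mem_chordParams {E : Type*} [AddCommGroup E] [Module ℝ E]
    {C : Set E} {O u v : E} (h : chordParams C (O + a • u) (s • u + v) ∈ 𝓝 0) :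
    ∀ᶠ h in 𝓝 (0 : ℝ), lineRadius a s h ∈ chordParams C O (cos h • u + sin h • v) := by
  have hlim : Tendsto (fun h => lineRadius a s h * sin h) (𝓝 0) (𝓝 0) := by
    have hcont : ContinuousAt (fun h => lineRadius a s h * sin h) 0 := by
      unfold lineRadius
      fun_prop (disch := simp)
    simpa [ContinuousAt] using hcont
  filter_upwards [hlim.eventually h, eventually_cos_sub_mul_sin_pos s] with h hmem hpos
  have hradius : a + lineRadius a s h * sin h * s = lineRadius a s h * cos h := by
    have hdiv : lineRadius a s h * (cos h - s * sin h) = a := div_mul_cancel₀ a hpos.ne'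
    linear_combination -hdiv
  have hpoint : O + a • u + (lineRadius a s h * sin h) • (s • u + v) =
      O + lineRadius a s h • (cos h • u + sin h • v) := by
    rw [smul_add (lineRadius a s h), smul_smul, ← hradius]
    module
  rwa [chordParams, Set.mem_ofPred_eq, ← hpoint]

end LineRadius

section LineDir

theorem lineDir_apply_zero (φ : ℝ) : lineDir φ 0 = cos φ := rfl

theorem lineDir_apply_one (φ : ℝ) : lineDir φ 1 = sin φ := rfl

theorem norm_lineDir (φ : ℝ) : ‖lineDir φ‖ = 1 := by
  simp [EuclideanSpace.norm_eq, Fin.sum_univ_two, lineDir_apply_zero, lineDir_apply_one]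

theorem lineDir_ne_zero (φ : ℝ) : lineDir φ ≠ 0 :=
  norm_ne_zero_iff.1 (norm_lineDir φ ▸ one_ne_zero)

theorem dist_add_smul_lineDir (O : EuclideanSpace ℝ (Fin 2)) (a b φ : ℝ) :
    dist (O + a • lineDir φ) (O + b • lineDir φ) = dist a b := by
  rw [dist_add_left, dist_eq_norm, ← sub_smul, norm_smul, norm_lineDir, mul_one, dist_eq_norm]

theorem lineDir_add (φ h : ℝ) :
    lineDir (φ + h) = cos h • lineDir φ + sin h • lineDir (φ + π / 2) := by
  refine PiLp.ext (Fin.forall_fin_two.2 ⟨?_, ?_⟩)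
  · simp only [PiLp.add_apply, PiLp.smul_apply, smul_eq_mul, lineDir_apply_zero, cos_add _ h,
      cos_add_pi_div_two]
    ring
  · simp only [PiLp.add_apply, PiLp.smul_apply, smul_eq_mul, lineDir_apply_one, sin_add _ h,
      sin_add_pi_div_two]
    ring

theorem span_lineDir_pair (φ : ℝ) :
    Submodule.span ℝ {lineDir φ, lineDir (φ + π / 2)} = ⊤ := by
  refine Submodule.eq_top_iff'.2 fun w => Submodule.mem_span_pair.2
    ⟨w 0 * cos φ + w 1 * sin φ, w 1 * cos φ - w 0 * sin φ, ?_⟩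
  refine PiLp.ext (Fin.forall_fin_two.2 ⟨?_, ?_⟩)
  · simp only [PiLp.add_apply, PiLp.smul_apply, smul_eq_mul, lineDir_apply_zero,
      cos_add_pi_div_two]
    linear_combination w 0 * sin_sq_add_cos_sq φ
  · simp only [PiLp.add_apply, PiLp.smul_apply, smul_eq_mul, lineDir_apply_one,
      sin_add_pi_div_two]
    linear_combination w 1 * sin_sq_add_cos_sq φ

end LineDir

theorem not_isLocalMax_dist_of_transversal {C : Set (EuclideanSpace ℝ (Fin 2))}
    {O : EuclideanSpace ℝ (Fin 2)} {a b : ℝ → ℝ}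
    (hchord : ∀ φ, chordParams C O (lineDir φ) = Set.uIcc (a φ) (b φ)) {φ s t : ℝ}
    (hab : a φ * b φ < 0)
    (ha : chordParams C (O + a φ • lineDir φ) (s • lineDir φ + lineDir (φ + π / 2)) ∈ 𝓝 0)
    (hb : chordParams C (O + b φ • lineDir φ) (t • lineDir φ + lineDir (φ + π / 2)) ∈ 𝓝 0) :
    ¬ IsLocalMax (fun ψ => dist (a ψ) (b ψ)) φ := by
  intro hmax
  have hle : ∀ᶠ h in 𝓝 (0 : ℝ),
      dist (lineRadius (a φ) s h) (lineRadius (b φ) t h) ≤ dist (a (φ + h)) (b (φ + h)) := by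
    filter_upwards [eventually_lineRadius_mem_chordParams ha,
      eventually_lineRadius_mem_chordParams hb] with h hah hbh
    rw [← lineDir_add, hchord] at hah hbh
    exact Real.dist_le_of_mem_uIcc hah hbh
  have hle_neg := (continuous_neg.tendsto' (0 : ℝ) 0 neg_zero).eventually hle
  have hsum := eventually_add_sub_le_two_mul_of_isLocalMax hmax
  obtain ⟨h, hlt, hh, hh_neg, hmid⟩ := ((eventually_two_mul_dist_lt_of_mul_neg hab s t).and
    ((hle.and (hle_neg.and hsum)).filter_mono nhdsWithin_le_nhds)).exists
  rw [← sub_eq_add_neg] at hh_neg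
  linarith

theorem statement10_general {C : Set (EuclideanSpace ℝ (Fin 2))} (hC : Convex ℝ C)
    {O : EuclideanSpace ℝ (Fin 2)} (hO : O ∈ interior C)
    {A B : ℝ → EuclideanSpace ℝ (Fin 2)}
    (hchord : ∀ φ : ℝ,
      {x | ∃ t : ℝ, x = O + t • lineDir φ} ∩ C = segment ℝ (A φ) (B φ))
    {φs : ℝ} (hmax : IsLocalMax (fun φ => dist (A φ) (B φ)) φs) :
    A φs ∈ Set.extremePoints ℝ C ∨ B φs ∈ Set.extremePoints ℝ C := by
  choose a b hA hB hparams using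
    fun φ => exists_chordParams_eq_uIcc (lineDir_ne_zero φ) (hchord φ)
  have hab : a φs * b φs < 0 := mul_neg_of_uIcc_mem_nhds_zero
    (hparams φs ▸ chordParams_mem_nhds_zero_of_mem_interior hO (lineDir φs))
  simp only [hA, hB, dist_add_smul_lineDir] at hmax ⊢
  by_contra! hext
  have hspan := span_lineDir_pair φs
  obtain ⟨s, hs⟩ := exists_transversal_of_notMem_extremePoints hC hspan (hparams φs) hext.1
  obtain ⟨t, ht⟩ := exists_transversal_of_notMem_extremePoints hC hspan
    ((hparams φs).trans (Set.uIcc_comm _ _)) hext.2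
  exact not_isLocalMax_dist_of_transversal hparams hab hs ht hmax

/-- Let `C` be a convex polygon in the plane (convex hull of a finite set) with
nonempty interior, `O` an interior point, and `φ*` a local maximizer of the
chord-length function `f φ = |l(φ) ∩ C|` with chord `[A φ*, B φ*]`.  Then at
least one of the endpoints `A φ*`, `B φ*` is a vertex (extreme point) of `C`. -/
theorem statement10 (V : Set (EuclideanSpace ℝ (Fin 2))) (hV : V.Finite)
    (C : Set (EuclideanSpace ℝ (Fin 2))) (hCdef : C = convexHull ℝ V)
    (hint : (interior C).Nonempty)
    (O : EuclideanSpace ℝ (Fin 2)) (hO : O ∈ interior C)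
    (A B : ℝ → EuclideanSpace ℝ (Fin 2))
    (hchord : ∀ φ : ℝ,
      {x | ∃ t : ℝ, x = O + t • lineDir φ} ∩ C = segment ℝ (A φ) (B φ))
    (f : ℝ → ℝ) (hf : ∀ φ, f φ = dist (A φ) (B φ))
    (φs : ℝ) (hmax : IsLocalMax f φs) :
    A φs ∈ Set.extremePoints ℝ C ∨ B φs ∈ Set.extremePoints ℝ C := by
  obtain rfl : f = fun φ => dist (A φ) (B φ) := funext hf
  exact statement10_general (hCdef ▸ convex_convexHull ℝ V) hO hchord hmax
end

section
/- Let C ⊂ ℝⁿ (n ≥ 2) be a closed convex set with nonempty interior and O an interior point. Suppose the segment [A*B*] with endpoints on ∂C and containing O is a local maximizer of chord length among segments through O with endpoints on ∂C. Then d_C(A*) + d_C(B*) ≤ n − 1, where d_C(P) is the maximal dimension k of an affine subspace H ⊆ ℝⁿ such that P lies in the interior of H ∩ C relative to H. -/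
open Real RealInnerProductSpace

/-- `dimAt C P` is the maximal dimension `k` of an affine subspace `H` such that
`P` lies in the interior of `H ∩ C` relative to `H`. -/
noncomputable def dimAt {n : ℕ} (C : Set (EuclideanSpace ℝ (Fin n)))
    (P : EuclideanSpace ℝ (Fin n)) : ℕ :=
  sSup {k : ℕ | ∃ H : AffineSubspace ℝ (EuclideanSpace ℝ (Fin n)),
    P ∈ H ∧ Module.finrank ℝ H.direction = k ∧
    ∃ ε : ℝ, 0 < ε ∧ Metric.ball P ε ∩ (H : Set (EuclideanSpace ℝ (Fin n))) ⊆ C}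

/-!
Put `u = A* - B*` and let `V`, `W` be the directions in which `C` extends both ways from `A*` and
from `B*`. If `p ∈ V` and `q ∈ W` satisfy `p + q = c • u`, then the chord can be pivoted about `O`,
its endpoints sliding along `A* + ℝ p` and `B* + ℝ q`. At a local maximum the first-order change of
the length vanishes, and then the squared length exceeds its original value by a sum of two
nonnegative terms that vanishes only if `c = 0` and `p = q = 0`. Hence `V ⊓ W = ⊥` and
`u ∉ V ⊔ W`, so that `dim V + dim W < n`.
-/

open Filter Topology

section FaceDirection

variable {E : Type*} [AddCommGroup E] [Module ℝ E] {C : Set E} {P v : E}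

/-- The direction of the smallest face of the convex set `C` containing its point `P`: the vectors
along which one can move a little from `P` both ways without leaving `C`. -/
def faceDirection (hC : Convex ℝ C) (hP : P ∈ C) : Submodule ℝ E where
  carrier := {v | ∀ᶠ t : ℝ in 𝓝 0, P + t • v ∈ C}
  zero_mem' := by simpa using hP
  add_mem' {v w} hv hw := by
    have hdouble : Tendsto (fun t : ℝ => 2 * t) (𝓝 0) (𝓝 0) :=
      Continuous.tendsto' (by fun_prop) _ _ (by simp)
    filter_upwards [hdouble.eventually hv, hdouble.eventually hw] with t hv hw
    convert hC hv hw (show (0 : ℝ) ≤ 1 / 2 by norm_num) (show (0 : ℝ) ≤ 1 / 2 by norm_num)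
      (by norm_num) using 1
    module
  smul_mem' c v hv := by
    have hscale : Tendsto (fun t : ℝ => t * c) (𝓝 0) (𝓝 0) :=
      Continuous.tendsto' (by fun_prop) _ _ (by simp)
    filter_upwards [hscale.eventually hv] with t ht
    rwa [smul_smul]

lemma mem_faceDirection (hC : Convex ℝ C) (hP : P ∈ C) :
    v ∈ faceDirection hC hP ↔ ∀ᶠ t : ℝ in 𝓝 0, P + t • v ∈ C :=
  Iff.rfl

variable [TopologicalSpace E] [IsTopologicalAddGroup E] [ContinuousConstSMul ℝ E]

lemma add_mem_frontier_of_sub_mem (hC : Convex ℝ C) (hP : P ∈ frontier C)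
    (hadd : P + v ∈ C) (hsub : P - v ∈ C) : P + v ∈ frontier C := by
  refine ⟨subset_closure hadd, fun hadd_int => hP.2 ?_⟩
  refine hC.openSegment_interior_self_subset_interior hadd_int hsub
    ⟨1 / 2, 1 / 2, by norm_num, by norm_num, by norm_num, ?_⟩
  module

lemma eventually_add_smul_mem_frontier (hC : Convex ℝ C) (hP : P ∈ C) (hP_frontier : P ∈ frontier C)
    (hv : v ∈ faceDirection hC hP) : ∀ᶠ t : ℝ in 𝓝 0, P + t • v ∈ frontier C := by
  have hneg : ∀ᶠ t : ℝ in 𝓝 0, P - t • v ∈ C := by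
    simpa only [smul_neg, ← sub_eq_add_neg] using
      (mem_faceDirection hC hP).1 (Submodule.neg_mem _ hv)
  filter_upwards [(mem_faceDirection hC hP).1 hv, hneg] with t hadd hsub
  exact add_mem_frontier_of_sub_mem hC hP_frontier hadd hsub

end FaceDirection

section Pivot

lemma eventually_one_add_mul_pos (c : ℝ) : ∀ᶠ t : ℝ in 𝓝 0, 0 < 1 + c * t := by
  have hcont : Tendsto (fun t : ℝ => 1 + c * t) (𝓝 0) (𝓝 1) :=
    Continuous.tendsto' (by fun_prop) _ _ (by simp)
  exact hcont.eventually_const_lt one_pos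

variable {E : Type*} [AddCommGroup E] [Module ℝ E]

/-- The displacement of `A - B` when a chord `[A, B]` pivots about its point `α • A + β • B`, its
endpoints sliding along the lines `A + ℝ p` and `B + ℝ q` with `p + q = c • (A - B)`. The time `t`
is normalized so that `A` moves with constant velocity `β • p`; the motion of `B` is then forced by
collinearity with the pivot. -/
noncomputable def pivotShift (α β c : ℝ) (p q : E) (t : ℝ) : E :=
  (β * t) • p - (α * t / (1 + c * t)) • q

@[simp]
lemma pivotShift_zero (α β c : ℝ) (p q : E) : pivotShift α β c p q 0 = 0 := by
  simp [pivotShift]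

lemma mem_segment_pivot {α β c t : ℝ} {A B p q : E} (hα : 0 < α) (hβ : 0 < β) (hαβ : α + β = 1)
    (hpq : p + q = c • (A - B)) (ht : 0 < 1 + c * t) :
    α • A + β • B ∈ segment ℝ (A + (β * t) • p) (B + (α * t / (1 + c * t)) • q) := by
  have hden : 0 < α + β * (1 + c * t) := by positivity
  refine ⟨α / (α + β * (1 + c * t)), β * (1 + c * t) / (α + β * (1 + c * t)), by positivity,
    by positivity, by field_simp, ?_⟩
  obtain rfl : q = c • (A - B) - p := eq_sub_of_add_eq' hpq
  obtain rfl : β = 1 - α := by linarith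
  match_scalars <;> field_simp <;> ring

end Pivot

section LocalMax

variable {E : Type*} [NormedAddCommGroup E] [InnerProductSpace ℝ E]

lemma inner_eq_zero_of_isLocalMax_norm {f : ℝ → E} {f' : E} {a : ℝ} (hf : HasDerivAt f f' a)
    (hmax : IsLocalMax (fun t => ‖f t‖) a) : ⟪f a, f'⟫ = 0 := by
  have hmax_sq : IsLocalMax (fun t => ‖f t‖ ^ 2) a := by
    filter_upwards [hmax] with t ht
    gcongr
  simpa using hmax_sq.hasDerivAt_eq_zero hf.norm_sq

lemma hasDerivAt_pivotShift (α β c : ℝ) (p q : E) :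
    HasDerivAt (pivotShift α β c p q) (β • p - α • q) 0 := by
  have hp : HasDerivAt (fun t : ℝ => β * t) β 0 := by
    simpa using (hasDerivAt_id (0 : ℝ)).const_mul β
  have hq : HasDerivAt (fun t : ℝ => α * t / (1 + c * t)) α 0 := by
    simpa using ((hasDerivAt_id (0 : ℝ)).const_mul α).fun_div
      (((hasDerivAt_id (0 : ℝ)).const_mul c).const_add 1) (by simp)
  exact (hp.smul_const p).sub (hq.smul_const q)

lemma norm_add_pivotShift_sq {α β c t : ℝ} {u p q : E} (hαβ : α + β = 1) (hpq : p + q = c • u)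
    (hcrit : ⟪u, β • p - α • q⟫ = 0) (ht : 1 + c * t ≠ 0) :
    ‖u + pivotShift α β c p q t‖ ^ 2 = ‖u‖ ^ 2 +
      2 * (α * β * (c * t) ^ 2 / (1 + c * t) * ‖u‖ ^ 2) + ‖pivotShift α β c p q t‖ ^ 2 := by
  have hsum : ⟪u, p⟫ + ⟪u, q⟫ = c * ‖u‖ ^ 2 := by
    rw [← inner_add_right, hpq, inner_smul_right, real_inner_self_eq_norm_sq]
  rw [inner_sub_right, inner_smul_right, inner_smul_right] at hcrit
  have hp : ⟪u, p⟫ = α * (c * ‖u‖ ^ 2) := by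
    linear_combination α * hsum + hcrit - ⟪u, p⟫ * hαβ
  have hq : ⟪u, q⟫ = β * (c * ‖u‖ ^ 2) := by
    linear_combination β * hsum - hcrit - ⟪u, q⟫ * hαβ
  have hinner : ⟪u, pivotShift α β c p q t⟫ =
      α * β * (c * t) ^ 2 / (1 + c * t) * ‖u‖ ^ 2 := by
    rw [pivotShift, inner_sub_right, inner_smul_right, inner_smul_right, hp, hq,
      div_mul_eq_mul_div, div_mul_eq_mul_div, eq_div_iff ht, sub_mul, div_mul_cancel₀ _ ht]
    ring
  rw [norm_add_sq_real, hinner]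

lemma eq_zero_of_norm_add_pivotShift_le {α β c t : ℝ} {u p q : E} (hα : 0 < α) (hβ : 0 < β)
    (hαβ : α + β = 1) (hu : u ≠ 0) (hpq : p + q = c • u) (hcrit : ⟪u, β • p - α • q⟫ = 0)
    (ht : t ≠ 0) (hden : 0 < 1 + c * t) (hle : ‖u + pivotShift α β c p q t‖ ≤ ‖u‖) :
    c = 0 ∧ p = 0 := by
  have hle_sq : ‖u + pivotShift α β c p q t‖ ^ 2 ≤ ‖u‖ ^ 2 := by gcongr
  rw [norm_add_pivotShift_sq hαβ hpq hcrit hden.ne'] at hle_sq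
  have hgrowth : 0 ≤ α * β * (c * t) ^ 2 / (1 + c * t) * ‖u‖ ^ 2 := by positivity
  have hshift_sq : 0 ≤ ‖pivotShift α β c p q t‖ ^ 2 := by positivity
  have hc : c = 0 := by
    have : α * β * (c * t) ^ 2 / (1 + c * t) * ‖u‖ ^ 2 = 0 := by linarith
    simpa [hα.ne', hβ.ne', hden.ne', ht, hu] using this
  have hshift : pivotShift α β c p q t = 0 := by
    rw [← norm_eq_zero, ← sq_eq_zero_iff]
    linarith
  subst hc
  obtain rfl : q = -p := by simpa [add_eq_zero_iff_neg_eq, eq_comm] using hpq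
  have htp : t • p = 0 := by
    rw [← hshift, pivotShift, zero_mul, add_zero, div_one, smul_neg, sub_neg_eq_add, ← add_smul,
      ← add_mul, add_comm β, hαβ, one_mul]
  exact ⟨rfl, (smul_eq_zero.1 htp).resolve_left ht⟩

lemma eq_zero_of_isLocalMax_pivot {α β c : ℝ} {u p q : E} (hα : 0 < α) (hβ : 0 < β)
    (hαβ : α + β = 1) (hu : u ≠ 0) (hpq : p + q = c • u)
    (hmax : IsLocalMax (fun t => ‖u + pivotShift α β c p q t‖) 0) : c = 0 ∧ p = 0 := by
  have hcrit : ⟪u, β • p - α • q⟫ = 0 := by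
    simpa using inner_eq_zero_of_isLocalMax_norm
      ((hasDerivAt_pivotShift α β c p q).const_add u) hmax
  have hnear := (hmax.and (eventually_one_add_mul_pos c)).filter_mono
    (nhdsWithin_le_nhds (s := {0}ᶜ))
  obtain ⟨t, ⟨hle, hden⟩, ht⟩ := (hnear.and self_mem_nhdsWithin).exists
  simp only [pivotShift_zero, add_zero] at hle
  exact eq_zero_of_norm_add_pivotShift_le hα hβ hαβ hu hpq hcrit ht hden hle

end LocalMax

section Chords

/-- The chords of `C` through `O`, each encoded as the pair of its endpoints. -/
def chordsThrough {E : Type*} [AddCommGroup E] [Module ℝ E] [TopologicalSpace E] (C : Set E)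
    (O : E) : Set (E × E) :=
  {x | x.1 ∈ frontier C ∧ x.2 ∈ frontier C ∧ O ∈ segment ℝ x.1 x.2}

variable {E : Type*} [NormedAddCommGroup E] [InnerProductSpace ℝ E] {C : Set E} {O A B : E}

lemma isLocalMax_norm_add_pivotShift {α β c : ℝ} {p q : E} (hC : Convex ℝ C) (hA : A ∈ C)
    (hB : B ∈ C) (hA_frontier : A ∈ frontier C) (hB_frontier : B ∈ frontier C)
    (hα : 0 < α) (hβ : 0 < β) (hαβ : α + β = 1)
    (hmax : IsLocalMaxOn (fun x : E × E => dist x.1 x.2) (chordsThrough C (α • A + β • B)) (A, B))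
    (hp : p ∈ faceDirection hC hA) (hq : q ∈ faceDirection hC hB) (hpq : p + q = c • (A - B)) :
    IsLocalMax (fun t => ‖A - B + pivotShift α β c p q t‖) 0 := by
  have hs : Tendsto (fun t : ℝ => β * t) (𝓝 0) (𝓝 0) :=
    Continuous.tendsto' (by fun_prop) _ _ (by simp)
  have hτ : Tendsto (fun t : ℝ => α * t / (1 + c * t)) (𝓝 0) (𝓝 0) := by
    have : ContinuousAt (fun t : ℝ => α * t / (1 + c * t)) 0 := by fun_prop (disch := simp)
    simpa using this.tendsto
  have hends : Tendsto (fun t : ℝ => (A + (β * t) • p, B + (α * t / (1 + c * t)) • q))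
      (𝓝 0) (𝓝 (A, B)) := by
    simpa using ((hs.smul_const p).const_add A).prodMk_nhds ((hτ.smul_const q).const_add B)
  filter_upwards [hends.eventually (eventually_nhdsWithin_iff.1 hmax),
    hs.eventually (eventually_add_smul_mem_frontier hC hA hA_frontier hp),
    hτ.eventually (eventually_add_smul_mem_frontier hC hB hB_frontier hq),
    eventually_one_add_mul_pos c] with t hle hAt hBt ht
  have hlen := hle ⟨hAt, hBt, mem_segment_pivot hα hβ hαβ hpq ht⟩
  simp only [dist_eq_norm, add_sub_add_comm] at hlen
  rwa [pivotShift_zero, add_zero]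

lemma eq_zero_of_add_eq_smul_sub {c : ℝ} {p q : E} (hC : Convex ℝ C) (hO : O ∈ interior C)
    (hA : A ∈ C) (hB : B ∈ C) (hchord : (A, B) ∈ chordsThrough C O)
    (hmax : IsLocalMaxOn (fun x : E × E => dist x.1 x.2) (chordsThrough C O) (A, B))
    (hp : p ∈ faceDirection hC hA) (hq : q ∈ faceDirection hC hB) (hpq : p + q = c • (A - B)) :
    c = 0 ∧ p = 0 := by
  obtain ⟨hA_frontier, hB_frontier, hOAB⟩ := hchord
  have hOC : O ∉ frontier C := fun h => h.2 hO
  have hAO : A ≠ O := ne_of_mem_of_not_mem hA_frontier hOC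
  have hBO : B ≠ O := ne_of_mem_of_not_mem hB_frontier hOC
  have hAB : A ≠ B := by
    rintro rfl
    exact hAO (by simpa [eq_comm] using hOAB)
  obtain ⟨α, β, hα, hβ, hαβ, rfl⟩ := mem_openSegment_of_ne_left_right hAO hBO hOAB
  exact eq_zero_of_isLocalMax_pivot hα hβ hαβ (sub_ne_zero.2 hAB) hpq
    (isLocalMax_norm_add_pivotShift hC hA hB hA_frontier hB_frontier hα hβ hαβ hmax hp hq hpq)

theorem finrank_faceDirection_add_lt [FiniteDimensional ℝ E] (hC : Convex ℝ C)
    (hO : O ∈ interior C) (hA : A ∈ C) (hB : B ∈ C) (hchord : (A, B) ∈ chordsThrough C O)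
    (hmax : IsLocalMaxOn (fun x : E × E => dist x.1 x.2) (chordsThrough C O) (A, B)) :
    Module.finrank ℝ (faceDirection hC hA) + Module.finrank ℝ (faceDirection hC hB) <
      Module.finrank ℝ E := by
  have hdisj : Disjoint (faceDirection hC hA) (faceDirection hC hB) := by
    refine Submodule.disjoint_def.2 fun v hvA hvB => ?_
    exact (eq_zero_of_add_eq_smul_sub (c := 0) hC hO hA hB hchord hmax hvA
      (Submodule.neg_mem _ hvB) (by simp)).2
  have hnotMem : A - B ∉ faceDirection hC hA ⊔ faceDirection hC hB := by
    intro h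
    obtain ⟨p, hp, q, hq, hpq⟩ := Submodule.mem_sup.1 h
    exact one_ne_zero (eq_zero_of_add_eq_smul_sub (c := 1) hC hO hA hB hchord hmax hp hq
      (by rwa [one_smul])).1
  rw [← Submodule.finrank_sup_add_finrank_inf_eq, hdisj.eq_bot, finrank_bot, add_zero]
  exact Submodule.finrank_lt fun htop => hnotMem (htop ▸ Submodule.mem_top)

end Chords

lemma dimAt_le_finrank_faceDirection {n : ℕ} {C : Set (EuclideanSpace ℝ (Fin n))}
    {P : EuclideanSpace ℝ (Fin n)} (hC : Convex ℝ C) (hP : P ∈ C) :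
    dimAt C P ≤ Module.finrank ℝ (faceDirection hC hP) := by
  refine csSup_le' ?_
  rintro _ ⟨H, hPH, rfl, ε, hε, hball⟩
  refine Submodule.finrank_mono fun v hv => (mem_faceDirection hC hP).2 ?_
  have hline : Tendsto (fun t : ℝ => P + t • v) (𝓝 0) (𝓝 P) :=
    Continuous.tendsto' (by fun_prop) _ _ (by simp)
  filter_upwards [hline.eventually (Metric.ball_mem_nhds P hε)] with t ht
  refine hball ⟨ht, ?_⟩
  rw [add_comm]
  exact AffineSubspace.vadd_mem_of_mem_direction (H.direction.smul_mem t hv) hPH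

theorem statement14_general {n : ℕ} {C : Set (EuclideanSpace ℝ (Fin n))} (hconv : Convex ℝ C)
    {O : EuclideanSpace ℝ (Fin n)} (hO : O ∈ interior C)
    {As Bs : EuclideanSpace ℝ (Fin n)} (hAC : As ∈ C) (hBC : Bs ∈ C)
    (hAs : As ∈ frontier C) (hBs : Bs ∈ frontier C) (hOseg : O ∈ segment ℝ As Bs)
    (hlocmax : ∃ U V : Set (EuclideanSpace ℝ (Fin n)),
      IsOpen U ∧ IsOpen V ∧ As ∈ U ∧ Bs ∈ V ∧
      ∀ A ∈ frontier C ∩ U, ∀ B ∈ frontier C ∩ V,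
        O ∈ segment ℝ A B → dist A B ≤ dist As Bs) :
    dimAt C As + dimAt C Bs ≤ n - 1 := by
  obtain ⟨U, V, hU, hV, hAU, hBV, hle⟩ := hlocmax
  have hmax : IsLocalMaxOn (fun x : EuclideanSpace ℝ (Fin n) × EuclideanSpace ℝ (Fin n) =>
      dist x.1 x.2) (chordsThrough C O) (As, Bs) := by
    refine eventually_nhdsWithin_iff.2 ?_
    filter_upwards [prod_mem_nhds (hU.mem_nhds hAU) (hV.mem_nhds hBV)]
      with ⟨A, B⟩ ⟨hA, hB⟩ ⟨hA_frontier, hB_frontier, hOAB⟩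
    exact hle A ⟨hA_frontier, hA⟩ B ⟨hB_frontier, hB⟩ hOAB
  have hlt := finrank_faceDirection_add_lt hconv hO hAC hBC ⟨hAs, hBs, hOseg⟩ hmax
  rw [finrank_euclideanSpace_fin] at hlt
  have hA := dimAt_le_finrank_faceDirection hconv hAC
  have hB := dimAt_le_finrank_faceDirection hconv hBC
  omega

/-- Let `C ⊆ ℝⁿ` (`n ≥ 2`) be closed convex with nonempty interior and `O` an
interior point.  If the segment `[A*, B*]` through `O`, with endpoints on `∂C`,
is a local maximizer of chord length among such segments, then
`d_C(A*) + d_C(B*) ≤ n - 1`. -/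
theorem statement14 (n : ℕ) (hn : 2 ≤ n)
    (C : Set (EuclideanSpace ℝ (Fin n)))
    (hC : IsClosed C) (hconv : Convex ℝ C) (hint : (interior C).Nonempty)
    (O : EuclideanSpace ℝ (Fin n)) (hO : O ∈ interior C)
    (As Bs : EuclideanSpace ℝ (Fin n))
    (hAs : As ∈ frontier C) (hBs : Bs ∈ frontier C) (hOseg : O ∈ segment ℝ As Bs)
    (hlocmax : ∃ U V : Set (EuclideanSpace ℝ (Fin n)),
      IsOpen U ∧ IsOpen V ∧ As ∈ U ∧ Bs ∈ V ∧
      ∀ A ∈ frontier C ∩ U, ∀ B ∈ frontier C ∩ V,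
        O ∈ segment ℝ A B → dist A B ≤ dist As Bs) :
    dimAt C As + dimAt C Bs ≤ n - 1 := by
  exact statement14_general hconv hO (hC.frontier_subset hAs) (hC.frontier_subset hBs)
    hAs hBs hOseg hlocmax
end

section
/- Let D ⊂ ℝ² be a compact convex set with nonempty interior that is smooth (unique supporting line at each boundary point), O an interior point, and f̃(φ) the length of the chord of D through O in direction φ. If φ* is a local maximizer of f̃ and the tangent lines to ∂D at the chord endpoints Ã(φ*) and B̃(φ*) are parallel, then the line through Ã(φ*) and B̃(φ*) is perpendicular to those tangent lines. -/
open Real RealInnerProductSpace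

/-!
Let `c = B - A` be the chord and `v` the normal at `A`, so that `-v` is the normal at `B`. If `c` is
not parallel to `v`, then some `q` makes an acute angle with both `v` and `c`. Turn the chord about
`O` to the direction `c + δ • q`: writing `O = A + s • c`, the endpoints move to `A - δs • q` and
`B + δ(1 - s) • q`. Both stay in `D` for small `δ > 0`, because at a point with a unique normal `D`
contains a piece of every ray that points strictly into the supporting half-space. As `⟪c, q⟫ > 0`,
the new chord is longer than `c`.
-/

section ConvexSet

open Set Filter Topology

variable {E : Type*} [NormedAddCommGroup E] [InnerProductSpace ℝ E]

theorem norm_lt_norm_add_of_inner_pos {x y : E} (h : 0 < ⟪x, y⟫) : ‖x‖ < ‖x + y‖ := by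
  refine lt_of_pow_lt_pow_left₀ 2 (norm_nonneg _) ?_
  rw [norm_add_sq_real]
  linarith [sq_nonneg ‖y‖]

theorem exists_inner_pos_of_not_sameRay_neg {x y : E} (h : ¬SameRay ℝ x (-y)) :
    ∃ q : E, 0 < ⟪q, x⟫ ∧ 0 < ⟪q, y⟫ := by
  have hx : 0 < ‖x‖ := norm_pos_iff.2 fun hx => h (hx ▸ SameRay.zero_left _)
  have hy : 0 < ‖y‖ := norm_pos_iff.2 fun hy => h (by simp [hy])
  have hlt : 0 < ‖x‖ * ‖y‖ + ⟪x, y⟫ := by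
    have := inner_lt_norm_mul_iff_real.2 fun heq => h (sameRay_iff_norm_smul_eq.2 heq.symm)
    rw [inner_neg_right, norm_neg] at this
    linarith
  -- `q` spans the bisector of the angle between `x` and `y`.
  refine ⟨‖y‖ • x + ‖x‖ • y, ?_, ?_⟩
  · calc 0 < ‖x‖ * (‖x‖ * ‖y‖ + ⟪x, y⟫) := mul_pos hx hlt
      _ = ⟪‖y‖ • x + ‖x‖ • y, x⟫ := by
        rw [inner_add_left, real_inner_smul_left, real_inner_smul_left,
          real_inner_self_eq_norm_sq, real_inner_comm]
        ring
  · calc 0 < ‖y‖ * (‖x‖ * ‖y‖ + ⟪x, y⟫) := mul_pos hy hlt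
      _ = ⟪‖y‖ • x + ‖x‖ • y, y⟫ := by
        rw [inner_add_left, real_inner_smul_left, real_inner_smul_left,
          real_inner_self_eq_norm_sq]
        ring

theorem dist_le_dist_of_mem_segment {F : Type*} [SeminormedAddCommGroup F] [NormedSpace ℝ F]
    {a b x y : F} (hx : x ∈ segment ℝ a b) (hy : y ∈ segment ℝ a b) : dist x y ≤ dist a b := by
  rw [← convexHull_pair] at hx hy
  have hbdd : Bornology.IsBounded (convexHull ℝ {a, b}) :=
    isBounded_convexHull.2 (toFinite _).isBounded
  calc dist x y ≤ Metric.diam (convexHull ℝ {a, b}) := Metric.dist_le_diam_of_mem hbdd hx hy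
    _ = dist a b := by rw [convexHull_diam, Metric.diam_pair]

theorem exists_ne_zero_add_smul_mem_of_mem_interior {F : Type*} [AddCommGroup F] [Module ℝ F]
    [TopologicalSpace F] [ContinuousAdd F] [ContinuousSMul ℝ F] {D : Set F} {x : F}
    (hx : x ∈ interior D) (u : F) : ∃ t : ℝ, t ≠ 0 ∧ x + t • u ∈ D := by
  have hcont : ContinuousAt (fun t : ℝ => x + t • u) 0 := by fun_prop
  have hmem : ∀ᶠ t : ℝ in 𝓝[≠] 0, x + t • u ∈ D :=
    (hcont.eventually_mem (by simpa using mem_interior_iff_mem_nhds.1 hx)).filter_mono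
      nhdsWithin_le_nhds
  exact (eventually_mem_nhdsWithin.and hmem).exists

/-- `v` is a unit outward normal of `D` at `P`, that is, `D` lies in the half-space bounded by the
hyperplane through `P` with unit normal `v`. Membership of `P` in `D` is not part of the notion. -/
def IsUnitNormal (D : Set E) (P v : E) : Prop :=
  ‖v‖ = 1 ∧ ∀ x ∈ D, ⟪x - P, v⟫ ≤ 0

namespace IsUnitNormal

variable {D : Set E} {P v : E}

theorem inner_neg_of_mem_interior (h : IsUnitNormal D P v) {x : E} (hx : x ∈ interior D) :
    ⟪x - P, v⟫ < 0 := by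
  have hv : innerSL ℝ v ≠ 0 := fun h0 => by
    have hvv : ⟪v, v⟫ = 0 := DFunLike.congr_fun h0 v
    simp [h.1] at hvv
  have hsub : interior D ⊆ innerSL ℝ v ⁻¹' Iic ⟪v, P⟫ := fun y hy => by
    have := h.2 y (interior_subset hy)
    rwa [real_inner_comm, inner_sub_right, sub_nonpos] at this
  have hlt : x ∈ innerSL ℝ v ⁻¹' Iio ⟪v, P⟫ := by
    have hopen : IsOpenMap (innerSL ℝ v) := (innerSL ℝ v).isOpenMap_of_ne_zero hv
    rw [← interior_Iic, hopen.preimage_interior_eq_interior_preimage (innerSL ℝ v).continuous]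
    exact interior_maximal hsub isOpen_interior hx
  rw [real_inner_comm, inner_sub_right, sub_neg]
  exact hlt

theorem notMem_interior (h : IsUnitNormal D P v) : P ∉ interior D := fun hP => by
  simpa using h.inner_neg_of_mem_interior hP

theorem mem_frontier (h : IsUnitNormal D P v) (hP : P ∈ D) : P ∈ frontier D :=
  ⟨subset_closure hP, h.notMem_interior⟩

theorem inner_sub_neg_of_mem_segment (h : IsUnitNormal D P v) {O Q : E} (hO : O ∈ interior D)
    (hPQ : O ∈ segment ℝ P Q) : ⟪Q - P, v⟫ < 0 := by
  obtain ⟨s, ⟨hs, -⟩, rfl⟩ := segment_eq_image' ℝ P Q ▸ hPQ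
  have hOP : s * ⟪Q - P, v⟫ < 0 := by
    simpa [real_inner_smul_left] using h.inner_neg_of_mem_interior hO
  exact neg_of_mul_neg_right hOP hs

end IsUnitNormal

section Separation

variable [CompleteSpace E] {D : Set E}

theorem exists_isUnitNormal_of_disjoint_interior (hD : Convex ℝ D) (hint : (interior D).Nonempty)
    {S : Set E} (hS : Convex ℝ S) (hdisj : Disjoint (interior D) S) {P : E} (hPD : P ∈ D)
    (hPS : P ∈ S) : ∃ w, IsUnitNormal D P w ∧ ∀ x ∈ S, 0 ≤ ⟪x - P, w⟫ := by
  obtain ⟨g, k, hg, hgD, hgS⟩ :=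
    geometric_hahn_banach_of_nonempty_interior hD hS hdisj hint ⟨P, hPS⟩
  obtain ⟨w, rfl⟩ := (InnerProductSpace.toDual ℝ E).surjective g
  simp only [InnerProductSpace.toDual_apply_apply] at hgD hgS
  have hw : w ≠ 0 := by simpa using hg
  have hk : ⟪w, P⟫ = k := le_antisymm (hgD P hPD) (hgS P hPS)
  have hinner (x : E) : ⟪x - P, ‖w‖⁻¹ • w⟫ = ‖w‖⁻¹ * (⟪w, x⟫ - k) := by
    rw [real_inner_smul_right, real_inner_comm, inner_sub_right, hk]
  refine ⟨‖w‖⁻¹ • w, ⟨norm_smul_inv_norm hw, fun x hx => ?_⟩, fun x hx => ?_⟩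
  · rw [hinner]
    exact mul_nonpos_of_nonneg_of_nonpos (by positivity) (sub_nonpos.2 (hgD x hx))
  · rw [hinner]
    exact mul_nonneg (by positivity) (sub_nonneg.2 (hgS x hx))

theorem exists_add_smul_mem_interior_of_unique_normal (hD : Convex ℝ D)
    (hint : (interior D).Nonempty) {P v u : E} (hP : P ∈ D) (hv : IsUnitNormal D P v)
    (huniq : ∃! w, IsUnitNormal D P w) (hu : ⟪u, v⟫ < 0) :
    ∃ T : ℝ, 0 < T ∧ P + T • u ∈ interior D := by
  by_contra! hout
  have hray : Convex ℝ ((fun t : ℝ => P + t • u) '' Ici 0) := by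
    have hline : (fun t : ℝ => P + t • u) = AffineMap.lineMap P (P + u) := by
      ext t
      simp [AffineMap.lineMap_apply, add_comm]
    rw [hline]
    exact (convex_Ici 0).affine_image _
  have hdisj : Disjoint (interior D) ((fun t : ℝ => P + t • u) '' Ici 0) := by
    rw [disjoint_right]
    rintro _ ⟨t, ht, rfl⟩
    rcases (mem_Ici.1 ht).eq_or_lt with rfl | ht
    · simpa using hv.notMem_interior
    · exact hout t ht
  obtain ⟨w, hw, hwray⟩ := exists_isUnitNormal_of_disjoint_interior hD hint hray hdisj hP
    ⟨0, self_mem_Ici, by simp⟩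
  have hwu : 0 ≤ ⟪u, w⟫ := by simpa using hwray _ ⟨1, mem_Ici.2 zero_le_one, rfl⟩
  rw [huniq.unique hw hv] at hwu
  exact hu.not_ge hwu

theorem eventually_add_smul_mem_of_unique_normal (hD : Convex ℝ D) (hint : (interior D).Nonempty)
    {P v u : E} (hP : P ∈ D) (hv : IsUnitNormal D P v) (huniq : ∃! w, IsUnitNormal D P w)
    (hu : ⟪u, v⟫ < 0) : ∀ᶠ t : ℝ in 𝓝[>] 0, P + t • u ∈ D := by
  obtain ⟨T, hT, hTD⟩ := exists_add_smul_mem_interior_of_unique_normal hD hint hP hv huniq hu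
  filter_upwards [Ioc_mem_nhdsGT hT] with t ht
  have := hD.add_smul_mem hP (interior_subset hTD) (t := t / T)
    ⟨div_nonneg ht.1.le hT.le, (div_le_one hT).2 ht.2⟩
  rwa [smul_smul, div_mul_cancel₀ _ hT.ne'] at this

end Separation

/-- `[A, B]` is a chord of `D` through `O` that is locally longest: it is at least as long as every
chord of `D` through `O` whose direction is close to `B - A`. The other chords are measured through
pairs of their points, so that they need not be closed and no parametrization by angles is
involved. -/
structure IsLocallyLongestChord (D : Set E) (O A B : E) : Prop where
  left_mem : A ∈ D
  right_mem : B ∈ D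
  mem_segment : O ∈ segment ℝ A B
  eventually_dist_le : ∀ᶠ u in 𝓝 (B - A), ∀ s t : ℝ,
    O + s • u ∈ D → O + t • u ∈ D → dist (O + s • u) (O + t • u) ≤ dist A B

namespace IsLocallyLongestChord

variable {D : Set E} {O A B : E}

theorem not_eventually_add_smul_mem (h : IsLocallyLongestChord D O A B) {s : ℝ}
    (hs : O = A + s • (B - A)) {q : E} (hq : 0 < ⟪q, B - A⟫)
    (hA : ∀ᶠ δ : ℝ in 𝓝[>] 0, A + δ • (-s) • q ∈ D) :
    ¬∀ᶠ δ : ℝ in 𝓝[>] 0, B + δ • (1 - s) • q ∈ D := by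
  intro hB
  have hdir : Tendsto (fun δ : ℝ => B - A + δ • q) (𝓝[>] 0) (𝓝 (B - A)) := by
    have : ContinuousAt (fun δ : ℝ => B - A + δ • q) 0 := by fun_prop
    simpa using this.tendsto.mono_left nhdsWithin_le_nhds
  obtain ⟨δ, hAδ, hBδ, hle, hδ⟩ :=
    (hA.and (hB.and ((hdir.eventually h.eventually_dist_le).and self_mem_nhdsWithin))).exists
  have hAeq : A + δ • (-s) • q = O + (-s) • (B - A + δ • q) := by rw [hs]; module
  have hBeq : B + δ • (1 - s) • q = O + (1 - s) • (B - A + δ • q) := by rw [hs]; module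
  have hnorm : ‖B - A + δ • q‖ ≤ ‖B - A‖ := by
    calc ‖B - A + δ • q‖
        = dist (O + (-s) • (B - A + δ • q)) (O + (1 - s) • (B - A + δ • q)) := by
          rw [dist_comm, dist_eq_norm]
          congr 1
          module
      _ ≤ dist A B := hle _ _ (hAeq ▸ hAδ) (hBeq ▸ hBδ)
      _ = ‖B - A‖ := by rw [dist_comm, dist_eq_norm]
  refine (norm_lt_norm_add_of_inner_pos ?_).not_ge hnorm
  rw [real_inner_smul_right, real_inner_comm]
  exact mul_pos hδ hq

end IsLocallyLongestChord

theorem statement17_general [CompleteSpace E] {D : Set E} (hD : Convex ℝ D) {O A B : E}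
    (hO : O ∈ interior D) (hchord : IsLocallyLongestChord D O A B)
    (hsmoothA : ∃! v, IsUnitNormal D A v) (hsmoothB : ∃! v, IsUnitNormal D B v) {v₁ v₂ : E}
    (hv₁ : IsUnitNormal D A v₁) (hv₂ : IsUnitNormal D B v₂) (hpar : v₂ = v₁ ∨ v₂ = -v₁) :
    ∃ t : ℝ, B - A = t • v₁ := by
  have hAv : ⟪B - A, v₁⟫ < 0 := hv₁.inner_sub_neg_of_mem_segment hO hchord.mem_segment
  have hBv : ⟪A - B, v₂⟫ < 0 :=
    hv₂.inner_sub_neg_of_mem_segment hO (segment_symm ℝ A B ▸ hchord.mem_segment)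
  obtain rfl : v₂ = -v₁ := hpar.resolve_left fun h => by
    rw [h, ← neg_sub, inner_neg_left] at hBv
    linarith
  have hOopen : O ∈ openSegment ℝ A B :=
    mem_openSegment_of_ne_left_right (fun h => hv₁.notMem_interior (h ▸ hO))
      (fun h => hv₂.notMem_interior (h ▸ hO)) hchord.mem_segment
  obtain ⟨s, ⟨hs0, hs1⟩, hs⟩ := openSegment_eq_image' ℝ A B ▸ hOopen
  by_contra! hne
  have hray : ¬SameRay ℝ v₁ (-(B - A)) := fun h => by
    obtain ⟨r, -, hr⟩ := h.exists_nonneg_left (norm_ne_zero_iff.1 (by simp [hv₁.1]))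
    exact hne (-r) (by rw [neg_smul, hr, neg_neg])
  obtain ⟨q, hqv, hqc⟩ := exists_inner_pos_of_not_sameRay_neg hray
  refine hchord.not_eventually_add_smul_mem hs.symm hqc ?_ ?_
  · refine eventually_add_smul_mem_of_unique_normal hD ⟨O, hO⟩ hchord.left_mem hv₁ hsmoothA ?_
    rw [real_inner_smul_left]
    exact mul_neg_of_neg_of_pos (neg_lt_zero.2 hs0) hqv
  · refine eventually_add_smul_mem_of_unique_normal hD ⟨O, hO⟩ hchord.right_mem hv₂ hsmoothB ?_
    rw [real_inner_smul_left, inner_neg_right]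
    exact mul_neg_of_pos_of_neg (sub_pos.2 hs1) (neg_lt_zero.2 hqv)

end ConvexSet

section Angle

open Filter Topology

theorem eventually_exists_eq_real_mul_exp_mul_I {a φ : ℝ} (ha : a ≠ 0) {U : Set ℝ}
    (hU : U ∈ 𝓝 φ) :
    ∀ᶠ z : ℂ in 𝓝 (a * Complex.exp (φ * Complex.I)),
      ∃ ψ ∈ U, ∃ r : ℝ, z = r * Complex.exp (ψ * Complex.I) := by
  set z₀ : ℂ := a * Complex.exp (φ * Complex.I) with hz₀_def
  have hz₀ : z₀ ≠ 0 := mul_ne_zero (Complex.ofReal_ne_zero.2 ha) (Complex.exp_ne_zero _)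
  have hcont : ContinuousAt (fun z : ℂ => φ + Complex.arg (z / z₀)) z₀ := by
    refine continuousAt_const.add (ContinuousAt.comp (g := Complex.arg) ?_ (by fun_prop))
    exact Complex.continuousAt_arg (by simp [div_self hz₀])
  have hU' : ∀ᶠ z : ℂ in 𝓝 z₀, φ + Complex.arg (z / z₀) ∈ U :=
    hcont.eventually_mem (by simpa [div_self hz₀] using hU)
  filter_upwards [hU'] with z hz
  refine ⟨_, hz, a * ‖z / z₀‖, ?_⟩
  calc z = z₀ * (z / z₀) := (mul_div_cancel₀ z hz₀).symm
    _ = z₀ * (‖z / z₀‖ * Complex.exp (Complex.arg (z / z₀) * Complex.I)) := by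
      rw [Complex.norm_mul_exp_arg_mul_I]
    _ = ↑(a * ‖z / z₀‖) * Complex.exp (↑(φ + Complex.arg (z / z₀)) * Complex.I) := by
      rw [hz₀_def]
      push_cast
      rw [add_mul, Complex.exp_add]
      ring

theorem orthonormalBasisOneI_repr_exp_mul_I (φ : ℝ) :
    Complex.orthonormalBasisOneI.repr (Complex.exp (φ * Complex.I)) = lineDir φ := by
  ext i
  fin_cases i <;> simp [lineDir, Complex.exp_ofReal_mul_I_re, Complex.exp_ofReal_mul_I_im]

theorem eventually_exists_eq_smul_lineDir {a φ : ℝ} (ha : a ≠ 0) {U : Set ℝ} (hU : U ∈ 𝓝 φ) :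
    ∀ᶠ u in 𝓝 (a • lineDir φ), ∃ ψ ∈ U, ∃ r : ℝ, u = r • lineDir ψ := by
  have hrepr (r ψ : ℝ) : Complex.orthonormalBasisOneI.repr (r * Complex.exp (ψ * Complex.I)) =
      r • lineDir ψ := by
    rw [← Complex.real_smul, map_smul, orthonormalBasisOneI_repr_exp_mul_I]
  rw [← hrepr, ← LinearIsometryEquiv.coe_toHomeomorph, ← Homeomorph.map_nhds_eq, eventually_map]
  filter_upwards [eventually_exists_eq_real_mul_exp_mul_I ha hU]
  rintro _ ⟨ψ, hψ, r, rfl⟩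
  exact ⟨ψ, hψ, r, hrepr r ψ⟩

theorem isLocallyLongestChord_of_isLocalMax_dist {D : Set (EuclideanSpace ℝ (Fin 2))}
    {O : EuclideanSpace ℝ (Fin 2)} (hO : O ∈ interior D) {A B : ℝ → EuclideanSpace ℝ (Fin 2)}
    (hchord : ∀ φ : ℝ,
      {x | ∃ t : ℝ, x = O + t • lineDir φ} ∩ D = segment ℝ (A φ) (B φ))
    {φ : ℝ} (hmax : IsLocalMax (fun ψ => dist (A ψ) (B ψ)) φ) :
    IsLocallyLongestChord D O (A φ) (B φ) := by
  have hmem {ψ t : ℝ} (ht : O + t • lineDir ψ ∈ D) :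
      O + t • lineDir ψ ∈ segment ℝ (A ψ) (B ψ) :=
    hchord ψ ▸ ⟨⟨t, rfl⟩, ht⟩
  have hOmem : O ∈ segment ℝ (A φ) (B φ) := by
    simpa using hmem (t := 0) (by simpa using interior_subset hO)
  obtain ⟨⟨a, ha⟩, hA⟩ := (hchord φ).symm ▸ left_mem_segment ℝ (A φ) (B φ)
  obtain ⟨⟨b, hb⟩, hB⟩ := (hchord φ).symm ▸ right_mem_segment ℝ (A φ) (B φ)
  have hdir : B φ - A φ = (b - a) • lineDir φ := by rw [ha, hb]; module
  have hne : b - a ≠ 0 := fun h0 => by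
    have hAB : A φ = B φ := (sub_eq_zero.1 (by rw [hdir, h0, zero_smul])).symm
    obtain ⟨t, ht0, ht⟩ := exists_ne_zero_add_smul_mem_of_mem_interior hO (lineDir φ)
    have hOA : O = A φ := by simpa [← hAB] using hOmem
    have htA : O + t • lineDir φ = A φ := by simpa [← hAB] using hmem ht
    have hzero : t • lineDir φ = 0 := by rwa [← hOA, add_eq_left] at htA
    exact smul_ne_zero ht0 (norm_ne_zero_iff.1 (by simp [norm_lineDir])) hzero
  refine ⟨hA, hB, hOmem, ?_⟩
  rw [hdir]
  filter_upwards [eventually_exists_eq_smul_lineDir hne hmax]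
  rintro _ ⟨ψ, hψ, r, rfl⟩ s t hs ht
  rw [smul_smul] at hs ht ⊢
  rw [smul_smul]
  exact (dist_le_dist_of_mem_segment (hmem hs) (hmem ht)).trans hψ

end Angle

/-- Let `D ⊆ ℝ²` be compact convex with nonempty interior and smooth: at each
boundary point there is a unique supporting line (i.e. a unique unit outward
normal).  Let `O` be an interior point and `f φ` the length of the chord
`[A φ, B φ] = l(φ) ∩ D` through `O` at angle `φ`.  If `φ*` is a local maximizer
of `f` and the tangent lines to `∂D` at `A φ*` and `B φ*` are parallel (their
unit normals `v₁, v₂` satisfy `v₂ = v₁` or `v₂ = -v₁`), then the chord `A φ* B φ*`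
is perpendicular to those tangent lines, i.e. `B φ* - A φ*` is parallel to `v₁`. -/
theorem statement17 (D : Set (EuclideanSpace ℝ (Fin 2)))
    (hD : IsCompact D) (hconv : Convex ℝ D) (hint : (interior D).Nonempty)
    (hsmooth : ∀ P ∈ frontier D, ∃! v : EuclideanSpace ℝ (Fin 2),
      ‖v‖ = 1 ∧ ∀ x ∈ D, ⟪x - P, v⟫ ≤ 0)
    (O : EuclideanSpace ℝ (Fin 2)) (hO : O ∈ interior D)
    (A B : ℝ → EuclideanSpace ℝ (Fin 2))
    (hchord : ∀ φ : ℝ,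
      {x | ∃ t : ℝ, x = O + t • lineDir φ} ∩ D = segment ℝ (A φ) (B φ))
    (f : ℝ → ℝ) (hf : ∀ φ, f φ = dist (A φ) (B φ))
    (φs : ℝ) (hmax : IsLocalMax f φs)
    (v₁ v₂ : EuclideanSpace ℝ (Fin 2))
    (hv₁ : ‖v₁‖ = 1 ∧ ∀ x ∈ D, ⟪x - A φs, v₁⟫ ≤ 0)
    (hv₂ : ‖v₂‖ = 1 ∧ ∀ x ∈ D, ⟪x - B φs, v₂⟫ ≤ 0)
    (hpar : v₂ = v₁ ∨ v₂ = -v₁) :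
    ∃ t : ℝ, B φs - A φs = t • v₁ :=
  have h : IsLocallyLongestChord D O (A φs) (B φs) :=
    isLocallyLongestChord_of_isLocalMax_dist hO hchord (funext hf ▸ hmax)
  statement17_general hconv hO h (hsmooth _ (IsUnitNormal.mem_frontier hv₁ h.left_mem))
    (hsmooth _ (IsUnitNormal.mem_frontier hv₂ h.right_mem)) hv₁ hv₂ hpar
end
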